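/- Let r : ℝ → ℝ be a C², 2π-periodic function with r > 0 and χ := r² + 2r′² − r r″ > 0 everywhere, and let (φ, t) satisfy t > 0, r(φ) − t r′(φ) > 0 and r(φ) + t r′(φ) > 0. Suppose S is a C² real-valued function on an open neighborhood of Ψ(φ,t) in ℝ² such that S(Ψ(φ′, t′)) = t′ r(φ′)² for all (φ′, t′) in a neighborhood of (φ, t). Then the mixed second partial derivative of S at Ψ(φ,t) equals ∂²S/∂φ₀∂φ₁ = −χ t r₀² r₁² / (2 r² (χ t² + r²)) (with r, χ at φ and r₀², r₁² at (φ,t)); in particular it is strictly negative, i.e. the outer billiard map is a positive twist map in symplectic polar coordinates. -/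

import Mathlib

/-!
Write `p = r φ`, `d = r′ φ`, `χ = chiF r φ`. Differentiating the arctangents gives
`∂_φ φ₀ = (p² − 2tpd + t²χ)/r₀²`, `∂_φ φ₁ = (p² + 2tpd + t²χ)/r₁²`,
`∂_t φ₀ = −p²/r₀²`, `∂_t φ₁ = p²/r₁²`, so the Jacobian of `Ψ` is
`2p²(p² + χt²)/(r₀² r₁²) > 0`.

Differentiating `S ∘ Ψ = t r²` in `φ` and `t` yields a linear system for the gradient of `S`
whose solution is `∂₀S = −r₀²/2`, `∂₁S = r₁²/2` (`fderiv_snd_eq`). The identity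
`∂₁S ∘ Ψ = r₁²/2` holds in a neighbourhood, so it can be differentiated again; Cramer's rule
then expresses `∂₀∂₁S` as `−χt` divided by the Jacobian. Since `r` is only `C²`, `Ψ` is only
`C¹`; what makes the second differentiation possible is that `r₁²` involves no derivative of `r`
beyond the first.
-/

open Real

noncomputable section

/-- `r₀²(φ,t) = (r(φ) − t r′(φ))² + t² r(φ)²`. -/
def r0sq (r : ℝ → ℝ) (φ t : ℝ) : ℝ := (r φ - t * deriv r φ) ^ 2 + t ^ 2 * r φ ^ 2

/-- `r₁²(φ,t) = (r(φ) + t r′(φ))² + t² r(φ)²`. -/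
def r1sq (r : ℝ → ℝ) (φ t : ℝ) : ℝ := (r φ + t * deriv r φ) ^ 2 + t ^ 2 * r φ ^ 2

/-- `χ(φ) = r² + 2r′² − r r″`, the numerator of the curvature in polar coordinates. -/
def chiF (r : ℝ → ℝ) (φ : ℝ) : ℝ :=
  r φ ^ 2 + 2 * (deriv r φ) ^ 2 - r φ * deriv (deriv r) φ

/-- The change of variables `Ψ(φ,t) = (φ₀, φ₁)`. -/
def Psi (r : ℝ → ℝ) (p : ℝ × ℝ) : ℝ × ℝ :=
  (p.1 - Real.arctan (p.2 * r p.1 / (r p.1 - p.2 * deriv r p.1)),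
   p.1 + Real.arctan (p.2 * r p.1 / (r p.1 + p.2 * deriv r p.1)))

/-- Derivative of `arctan (u / v)` in the form free of division by `v`. -/
lemma hasDerivAt_arctan_div {u v : ℝ → ℝ} {u' v' x : ℝ} (hu : HasDerivAt u u' x)
    (hv : HasDerivAt v v' x) (hne : v x ≠ 0) :
    HasDerivAt (fun y => Real.arctan (u y / v y))
      ((v x * u' - u x * v') / (v x ^ 2 + u x ^ 2)) x := by
  refine (hu.div hv hne).arctan.congr_deriv ?_
  have : v x ^ 2 + u x ^ 2 ≠ 0 := by positivity
  have h2 : 1 + (u x / v x) ^ 2 ≠ 0 := by positivity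
  rw [show (u / v) x = u x / v x from rfl]
  field_simp

lemma r0sq_pos {r : ℝ → ℝ} {φ t : ℝ} (h0 : 0 < r φ - t * deriv r φ) : 0 < r0sq r φ t := by
  unfold r0sq; positivity

lemma r1sq_pos {r : ℝ → ℝ} {φ t : ℝ} (h1 : 0 < r φ + t * deriv r φ) : 0 < r1sq r φ t := by
  unfold r1sq; positivity

lemma hasDerivAt_r {r : ℝ → ℝ} (hr : ContDiff ℝ 2 r) (φ : ℝ) :
    HasDerivAt r (deriv r φ) φ :=
  (hr.differentiable (by norm_num) φ).hasDerivAt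

lemma contDiff_deriv_r {r : ℝ → ℝ} (hr : ContDiff ℝ 2 r) : ContDiff ℝ 1 (deriv r) :=
  ((contDiff_succ_iff_deriv (n := 1)).1 hr).2.2

lemma hasDerivAt_deriv_r {r : ℝ → ℝ} (hr : ContDiff ℝ 2 r) (φ : ℝ) :
    HasDerivAt (deriv r) (deriv (deriv r) φ) φ :=
  ((contDiff_deriv_r hr).differentiable (by norm_num) φ).hasDerivAt

/-- The partial derivative of `Ψ` in `φ`. -/
lemma hasDerivAt_Psi_fst {r : ℝ → ℝ} (hr : ContDiff ℝ 2 r) {φ t : ℝ}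
    (h0 : 0 < r φ - t * deriv r φ) (h1 : 0 < r φ + t * deriv r φ) :
    HasDerivAt (fun x => Psi r (x, t))
      ((r φ ^ 2 - 2 * t * r φ * deriv r φ + t ^ 2 * chiF r φ) / r0sq r φ t,
       (r φ ^ 2 + 2 * t * r φ * deriv r φ + t ^ 2 * chiF r φ) / r1sq r φ t) φ := by
  have hu := (hasDerivAt_r hr φ).const_mul t
  have hd := (hasDerivAt_deriv_r hr φ).const_mul t
  have A := (hasDerivAt_id φ).sub
    (hasDerivAt_arctan_div hu ((hasDerivAt_r hr φ).sub hd) h0.ne')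
  have B := (hasDerivAt_id φ).add
    (hasDerivAt_arctan_div hu ((hasDerivAt_r hr φ).add hd) h1.ne')
  have e0 := (r0sq_pos h0).ne'
  have e1 := (r1sq_pos h1).ne'
  refine (A.prodMk B).congr_deriv ?_
  simp only [Pi.sub_apply, Pi.add_apply]
  rw [show (r φ - t * deriv r φ) ^ 2 + (t * r φ) ^ 2 = r0sq r φ t by unfold r0sq; ring,
    show (r φ + t * deriv r φ) ^ 2 + (t * r φ) ^ 2 = r1sq r φ t by unfold r1sq; ring]
  ext
  · dsimp only
    field_simp
    unfold r0sq chiF; ring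
  · dsimp only
    field_simp
    unfold r1sq chiF; ring

/-- The partial derivative of `Ψ` in `t`. -/
lemma hasDerivAt_Psi_snd {r : ℝ → ℝ} {φ t : ℝ}
    (h0 : 0 < r φ - t * deriv r φ) (h1 : 0 < r φ + t * deriv r φ) :
    HasDerivAt (fun s => Psi r (φ, s))
      (-(r φ ^ 2) / r0sq r φ t, r φ ^ 2 / r1sq r φ t) t := by
  have hu := (hasDerivAt_id t).mul_const (r φ)
  have hd := (hasDerivAt_id t).mul_const (deriv r φ)
  have A := (hasDerivAt_arctan_div hu (hd.const_sub (r φ)) h0.ne').const_sub φ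
  have B := (hasDerivAt_arctan_div hu (hd.const_add (r φ)) h1.ne').const_add φ
  have e0 := (r0sq_pos h0).ne'
  have e1 := (r1sq_pos h1).ne'
  refine (A.prodMk B).congr_deriv ?_
  simp only [id]
  rw [show (r φ - t * deriv r φ) ^ 2 + (t * r φ) ^ 2 = r0sq r φ t by unfold r0sq; ring,
    show (r φ + t * deriv r φ) ^ 2 + (t * r φ) ^ 2 = r1sq r φ t by unfold r1sq; ring]
  ext
  · dsimp only
    ring
  · dsimp only
    ring

/-- Chain rule for `f ∘ Ψ = g`: the two partial derivatives of `g` expressed through the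
partial derivatives of `f`. -/
lemma chain_Psi {r : ℝ → ℝ} (hr : ContDiff ℝ 2 r) {φ t : ℝ}
    (h0 : 0 < r φ - t * deriv r φ) (h1 : 0 < r φ + t * deriv r φ)
    {f g : ℝ × ℝ → ℝ} (hf : DifferentiableAt ℝ f (Psi r (φ, t)))
    (hfg : ∀ᶠ q in nhds (φ, t), f (Psi r q) = g q) {gφ gt : ℝ}
    (hgφ : HasDerivAt (fun x => g (x, t)) gφ φ) (hgt : HasDerivAt (fun s => g (φ, s)) gt t) :
    fderiv ℝ f (Psi r (φ, t)) (1, 0) *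
          ((r φ ^ 2 - 2 * t * r φ * deriv r φ + t ^ 2 * chiF r φ) / r0sq r φ t)
        + fderiv ℝ f (Psi r (φ, t)) (0, 1) *
          ((r φ ^ 2 + 2 * t * r φ * deriv r φ + t ^ 2 * chiF r φ) / r1sq r φ t) = gφ ∧
      fderiv ℝ f (Psi r (φ, t)) (1, 0) * (-(r φ ^ 2) / r0sq r φ t)
        + fderiv ℝ f (Psi r (φ, t)) (0, 1) * (r φ ^ 2 / r1sq r φ t) = gt := by
  have split : ∀ (L : ℝ × ℝ →L[ℝ] ℝ) (a b : ℝ), L (a, b) = L (1, 0) * a + L (0, 1) * b := by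
    intro L a b
    have : ((a, b) : ℝ × ℝ) = a • ((1, 0) : ℝ × ℝ) + b • ((0, 1) : ℝ × ℝ) := by
      ext <;> simp
    rw [this, map_add, map_smul, map_smul, smul_eq_mul, smul_eq_mul]
    ring
  have c1 : ContinuousAt (fun x : ℝ => (x, t)) φ := by fun_prop
  have c2 : ContinuousAt (fun s : ℝ => (φ, s)) t := by fun_prop
  constructor
  · rw [← split]
    have k := hf.hasFDerivAt.comp_hasDerivAt φ (hasDerivAt_Psi_fst hr h0 h1)
    exact k.unique (hgφ.congr_of_eventuallyEq (c1.eventually hfg))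
  · rw [← split]
    have k := hf.hasFDerivAt.comp_hasDerivAt t (hasDerivAt_Psi_snd (r := r) h0 h1)
    exact k.unique (hgt.congr_of_eventuallyEq (c2.eventually hfg))

/-- `∂₁S ∘ Ψ = r₁² / 2`: the solution of the linear system obtained from `chain_Psi` applied to
`S ∘ Ψ = t r²`. -/
lemma fderiv_snd_eq {r : ℝ → ℝ} (hr : ContDiff ℝ 2 r) {φ t : ℝ}
    (hpos : 0 < r φ) (hchi : 0 < chiF r φ)
    (h0 : 0 < r φ - t * deriv r φ) (h1 : 0 < r φ + t * deriv r φ)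
    {S : ℝ × ℝ → ℝ} (hS : DifferentiableAt ℝ S (Psi r (φ, t)))
    (hval : ∀ᶠ q : ℝ × ℝ in nhds (φ, t), S (Psi r q) = q.2 * r q.1 ^ 2) :
    fderiv ℝ S (Psi r (φ, t)) (0, 1) = r1sq r φ t / 2 := by
  have g1 : HasDerivAt (fun x => t * r x ^ 2) (2 * t * r φ * deriv r φ) φ :=
    (((hasDerivAt_r hr φ).pow 2).const_mul t).congr_deriv (by simp; ring)
  have g2 : HasDerivAt (fun s : ℝ => s * r φ ^ 2) (r φ ^ 2) t := by
    simpa using (hasDerivAt_id t).mul_const (r φ ^ 2)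
  obtain ⟨E1, E2⟩ := chain_Psi hr h0 h1 (g := fun q => q.2 * r q.1 ^ 2) hS hval g1 g2
  have e0 := (r0sq_pos h0).ne'
  have e1 := (r1sq_pos h1).ne'
  set X := fderiv ℝ S (Psi r (φ, t)) (1, 0)
  set Y := fderiv ℝ S (Psi r (φ, t)) (0, 1)
  -- In the rescaled unknowns `x = X / r₀²`, `y = Y / r₁²` the system has no denominators.
  obtain ⟨x, hx⟩ : ∃ x, X = x * r0sq r φ t := ⟨X / r0sq r φ t, by field_simp⟩
  obtain ⟨y, hy⟩ : ∃ y, Y = y * r1sq r φ t := ⟨Y / r1sq r φ t, by field_simp⟩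
  rw [hx, hy] at E1 E2
  field_simp at E1 E2
  have hJ : r φ ^ 2 + t ^ 2 * chiF r φ ≠ 0 := by positivity
  have hyx : x = y - 1 := by linarith
  have : y = 1 / 2 := by
    apply mul_left_cancel₀ hJ
    rw [hyx] at E1
    linear_combination E1 / 2
  rw [hy, this]; ring

/-- The mixed second partial derivative of the generating function `S` at
`Ψ(φ,t)` equals `−χ t r₀² r₁² / (2 r² (χ t² + r²))`; in particular it is strictly negative,
i.e. the outer billiard map is a positive twist map in symplectic polar coordinates. -/
theorem generating_function_mixed_second_derivative
    (r : ℝ → ℝ) (hr : ContDiff ℝ 2 r) (hper : ∀ φ, r (φ + 2 * π) = r φ)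
    (hpos : ∀ φ, 0 < r φ) (hchi : ∀ φ, 0 < chiF r φ)
    (φ t : ℝ) (ht : 0 < t)
    (h0 : 0 < r φ - t * deriv r φ) (h1 : 0 < r φ + t * deriv r φ)
    (S : ℝ × ℝ → ℝ) (U : Set (ℝ × ℝ)) (hU : IsOpen U) (hmem : Psi r (φ, t) ∈ U)
    (hS : ContDiffOn ℝ 2 S U)
    (hval : ∀ᶠ q : ℝ × ℝ in nhds (φ, t), S (Psi r q) = q.2 * r q.1 ^ 2) :
    deriv (fun a => deriv (fun b => S (a, b)) ((Psi r (φ, t)).2)) ((Psi r (φ, t)).1)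
        = -(chiF r φ * t * r0sq r φ t * r1sq r φ t)
            / (2 * r φ ^ 2 * (chiF r φ * t ^ 2 + r φ ^ 2)) ∧
    deriv (fun a => deriv (fun b => S (a, b)) ((Psi r (φ, t)).2)) ((Psi r (φ, t)).1) < 0 := by
  have hp := hpos φ
  have hc := hchi φ
  have e0 := r0sq_pos h0
  have e1 := r1sq_pos h1
  have hr' : Continuous (deriv r) := (contDiff_deriv_r hr).continuous
  have hrc : Continuous r := hr.continuous
  have cPsi : ContinuousAt (Psi r) (φ, t) := by
    have n0 : r (φ, t).1 - (φ, t).2 * deriv r (φ, t).1 ≠ 0 := h0.ne'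
    have n1 : r (φ, t).1 + (φ, t).2 * deriv r (φ, t).1 ≠ 0 := h1.ne'
    unfold Psi
    refine ContinuousAt.prodMk ?_ ?_
    · refine continuousAt_fst.sub (Real.continuous_arctan.continuousAt.comp ?_)
      exact ContinuousAt.div (by fun_prop) (by fun_prop) n0
    · refine continuousAt_fst.add (Real.continuous_arctan.continuousAt.comp ?_)
      exact ContinuousAt.div (by fun_prop) (by fun_prop) n1
  have hSat : ∀ q ∈ U, ContDiffAt ℝ 2 S q := fun q hq => hS.contDiffAt (hU.mem_nhds hq)
  have hSd : ∀ q ∈ U, DifferentiableAt ℝ S q :=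
    fun q hq => (hSat q hq).differentiableAt (by norm_num)
  set P := Psi r (φ, t) with hP
  have hF : DifferentiableAt ℝ (fderiv ℝ S) P :=
    ((hSat P hmem).fderiv_right (m := 1) (by norm_num)).differentiableAt (by norm_num)
  have hH : DifferentiableAt ℝ (fun q => fderiv ℝ S q (0, 1)) P :=
    hF.clm_apply (differentiableAt_const _)
  have hHval : ∀ᶠ q : ℝ × ℝ in nhds (φ, t),
      fderiv ℝ S (Psi r q) (0, 1) = r1sq r q.1 q.2 / 2 := by
    have k0 : ∀ᶠ q : ℝ × ℝ in nhds (φ, t), 0 < r q.1 - q.2 * deriv r q.1 :=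
      (show Continuous fun q : ℝ × ℝ => r q.1 - q.2 * deriv r q.1 by
        fun_prop).continuousAt.eventually (lt_mem_nhds h0)
    have k1 : ∀ᶠ q : ℝ × ℝ in nhds (φ, t), 0 < r q.1 + q.2 * deriv r q.1 :=
      (show Continuous fun q : ℝ × ℝ => r q.1 + q.2 * deriv r q.1 by
        fun_prop).continuousAt.eventually (lt_mem_nhds h1)
    filter_upwards [k0, k1, cPsi.eventually (hU.mem_nhds hmem), hval.eventually_nhds]
      with q a0 a1 aU aval
    exact fderiv_snd_eq hr (hpos _) (hchi _) a0 a1 (hSd _ aU) aval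
  have g1 : HasDerivAt (fun x => r1sq r x t / 2)
      ((r φ + t * deriv r φ) * (deriv r φ + t * deriv (deriv r) φ)
        + t ^ 2 * r φ * deriv r φ) φ := by
    have := ((((hasDerivAt_r hr φ).add ((hasDerivAt_deriv_r hr φ).const_mul t)).pow 2).add
      (((hasDerivAt_r hr φ).pow 2).const_mul (t ^ 2))).div_const 2
    exact this.congr_deriv (by simp; ring)
  have g2 : HasDerivAt (fun s => r1sq r φ s / 2)
      ((r φ + t * deriv r φ) * deriv r φ + t * r φ ^ 2) t := by
    have := (((((hasDerivAt_id t).mul_const (deriv r φ)).const_add (r φ)).pow 2).add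
      (((hasDerivAt_id t).pow 2).mul_const (r φ ^ 2))).div_const 2
    exact this.congr_deriv (by simp; ring)
  obtain ⟨E1, E2⟩ := chain_Psi hr h0 h1 (g := fun q => r1sq r q.1 q.2 / 2) hH hHval g1 g2
  -- The iterated one-variable derivative is the first partial derivative of `∂₁S`.
  have hD : deriv (fun a => deriv (fun b => S (a, b)) P.2) P.1
      = fderiv ℝ (fun q => fderiv ℝ S q (0, 1)) P (1, 0) := by
    have hev : (fun a => deriv (fun b => S (a, b)) P.2)
        =ᶠ[nhds P.1] fun a => fderiv ℝ S (a, P.2) (0, 1) := by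
      have c : ContinuousAt (fun a : ℝ => (a, P.2)) P.1 := by fun_prop
      filter_upwards [c.eventually (hU.mem_nhds hmem)] with a ha
      exact ((hSd _ ha).hasFDerivAt.comp_hasDerivAt P.2
        ((hasDerivAt_const P.2 a).prodMk (hasDerivAt_id P.2))).deriv
    rw [hev.deriv_eq]
    have hH' : HasFDerivAt (fun q => fderiv ℝ S q (0, 1))
        (fderiv ℝ (fun q => fderiv ℝ S q (0, 1)) P) (P.1, P.2) := hH.hasFDerivAt
    exact (hH'.comp_hasDerivAt P.1
      ((hasDerivAt_id P.1).prodMk (hasDerivAt_const P.1 P.2))).deriv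
  have key : deriv (fun a => deriv (fun b => S (a, b)) P.2) P.1
      = -(chiF r φ * t * r0sq r φ t * r1sq r φ t)
            / (2 * r φ ^ 2 * (chiF r φ * t ^ 2 + r φ ^ 2)) := by
    rw [hD]
    rw [← hP] at E1 E2
    set X := fderiv ℝ (fun q => fderiv ℝ S q (0, 1)) P (1, 0)
    set Y := fderiv ℝ (fun q => fderiv ℝ S q (0, 1)) P (0, 1)
    have n0 := e0.ne'
    have n1 := e1.ne'
    obtain ⟨x, hx⟩ : ∃ x, X = x * r0sq r φ t := ⟨X / r0sq r φ t, by field_simp⟩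
    obtain ⟨y, hy⟩ : ∃ y, Y = y * r1sq r φ t := ⟨Y / r1sq r φ t, by field_simp⟩
    have F1 : x * (r φ ^ 2 - 2 * t * r φ * deriv r φ + t ^ 2 * chiF r φ)
        + y * (r φ ^ 2 + 2 * t * r φ * deriv r φ + t ^ 2 * chiF r φ)
        = (r φ + t * deriv r φ) * (deriv r φ + t * deriv (deriv r) φ)
          + t ^ 2 * r φ * deriv r φ := by
      rw [← E1, hx, hy]; field_simp
    have F2 : (y - x) * r φ ^ 2
        = (r φ + t * deriv r φ) * deriv r φ + t * r φ ^ 2 := by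
      rw [← E2, hx, hy]; field_simp; ring
    -- Cramer's rule: eliminating `y` makes the right-hand side collapse to `-χ t r₁²`.
    have hX : x * (2 * r φ ^ 2 * (chiF r φ * t ^ 2 + r φ ^ 2))
        = -(chiF r φ * t * r1sq r φ t) := by
      have : chiF r φ = r φ ^ 2 + 2 * (deriv r φ) ^ 2 - r φ * deriv (deriv r) φ := rfl
      rw [this] at F1 ⊢
      unfold r1sq
      linear_combination r φ ^ 2 * F1 - (r φ ^ 2 + 2 * t * r φ * deriv r φ + t ^ 2 *
        (r φ ^ 2 + 2 * (deriv r φ) ^ 2 - r φ * deriv (deriv r) φ)) * F2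
    rw [eq_div_iff (by positivity), hx]
    linear_combination r0sq r φ t * hX
  refine ⟨key, ?_⟩
  rw [key]
  exact div_neg_of_neg_of_pos (neg_neg_of_pos (by positivity)) (by positivity)
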